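/- Let L be a 3×3 integer matrix with determinant ±1 whose characteristic polynomial is irreducible over ℚ and has three real roots ν, μ, λ with 0 < ν < 1 < μ < λ, and let v ∈ ℝ³ be a unit eigenvector of L for the eigenvalue μ. Then there exists a constant C > 0 such that for every D ≥ 1, every x₀ ∈ ℝ³ and every y ∈ ℝ³, there exist t ∈ [0, D] and m ∈ ℤ³ with ‖x₀ + t·v − y − m‖ ≤ C/√D. (Equivalently: the projection to the torus T³ = ℝ³/ℤ³ of any arc of length D of a line in the direction v is C/√D-dense in T³.) -/

import Mathlib

open Polynomial

lemma dirichlet_aux (a c : Fin 3 → ℝ) : ∃ K : ℝ, 0 < K ∧ ∀ k : ℕ, 1 ≤ k →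
    ∃ m : Fin 3 → ℤ, m ≠ 0 ∧ (∀ i, |(m i : ℝ)| ≤ (k:ℝ)^2) ∧
      |∑ i, a i * (m i : ℝ)| ≤ K / k ∧ |∑ i, c i * (m i : ℝ)| ≤ K / k := by
  obtain ⟨H, hH0, hHa, hHc⟩ : ∃ H : ℝ, 0 < H ∧ ∑ i, |a i| ≤ H ∧ ∑ i, |c i| ≤ H := by
    refine ⟨1 + ∑ i, |a i| + ∑ i, |c i|, ?_, ?_, ?_⟩ <;>
    · have h1 : 0 ≤ ∑ i, |a i| := Finset.sum_nonneg fun _ _ => abs_nonneg _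
      have h2 : 0 ≤ ∑ i, |c i| := Finset.sum_nonneg fun _ _ => abs_nonneg _
      linarith
  refine ⟨2 * H, by positivity, fun k hk => ?_⟩
  have hk0 : (0:ℝ) < k := by exact_mod_cast hk
  have bound : ∀ w : Fin 3 → ℝ, ∑ i, |w i| ≤ H → ∀ x : Fin 3 → Fin (k^2+1),
      |∑ i, w i * ((x i : ℕ) : ℝ)| ≤ H * (k:ℝ)^2 := by
    intro w hw x
    calc |∑ i, w i * ((x i : ℕ) : ℝ)| ≤ ∑ i, |w i * ((x i : ℕ) : ℝ)| :=
          Finset.abs_sum_le_sum_abs _ _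
      _ ≤ ∑ i, |w i| * (k:ℝ)^2 := by
          refine Finset.sum_le_sum fun i _ => ?_
          rw [abs_mul, Nat.abs_cast]
          gcongr
          have := (x i).is_lt
          exact_mod_cast (Nat.lt_succ_iff.mp this)
      _ = (∑ i, |w i|) * (k:ℝ)^2 := by rw [Finset.sum_mul]
      _ ≤ _ := by gcongr
  let g : (Fin 3 → ℝ) → (Fin 3 → Fin (k^2+1)) → ℝ := fun w x =>
    (∑ i, w i * ((x i : ℕ) : ℝ) + H * (k:ℝ)^2) * (k / (2 * H))
  have g0 : ∀ w : Fin 3 → ℝ, ∑ i, |w i| ≤ H → ∀ x, 0 ≤ g w x := by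
    intro w hw x
    have := (abs_le.mp (bound w hw x)).1
    exact mul_nonneg (by linarith) (by positivity)
  have g1 : ∀ w : Fin 3 → ℝ, ∑ i, |w i| ≤ H → ∀ x, g w x ≤ (k^3 : ℕ) := by
    intro w hw x
    have := (abs_le.mp (bound w hw x)).2
    calc g w x ≤ (H * (k:ℝ)^2 + H * (k:ℝ)^2) * (k / (2 * H)) := by
          simp only [g]; gcongr
      _ = _ := by push_cast; field_simp; ring
  have gf : ∀ w : Fin 3 → ℝ, ∑ i, |w i| ≤ H → ∀ x, ⌊g w x⌋₊ < k^3 + 1 := by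
    intro w hw x
    exact Nat.lt_succ_of_le (Nat.floor_le_of_le (g1 w hw x))
  let F : (Fin 3 → Fin (k^2+1)) → Fin (k^3+1) × Fin (k^3+1) := fun x =>
    (⟨⌊g a x⌋₊, gf a hHa x⟩, ⟨⌊g c x⌋₊, gf c hHc x⟩)
  have hcard : Fintype.card (Fin (k^3+1) × Fin (k^3+1)) <
      Fintype.card (Fin 3 → Fin (k^2+1)) := by
    simp only [Fintype.card_prod, Fintype.card_fin, Fintype.card_fun]
    have : k^3 ≤ k^4 := Nat.pow_le_pow_right hk (by norm_num)
    have h2 : 0 < k^2 := by positivity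
    nlinarith
  obtain ⟨x, y, hxy, hF⟩ := Fintype.exists_ne_map_eq_of_card_lt F hcard
  have hFa : ⌊g a x⌋₊ = ⌊g a y⌋₊ := by
    have := congrArg (fun p => (p.1 : ℕ)) hF
    simpa [F] using this
  have hFc : ⌊g c x⌋₊ = ⌊g c y⌋₊ := by
    have := congrArg (fun p => (p.2 : ℕ)) hF
    simpa [F] using this
  have diff : ∀ w : Fin 3 → ℝ, ∑ i, |w i| ≤ H → ⌊g w x⌋₊ = ⌊g w y⌋₊ →
      |∑ i, w i * ((((x i : ℕ) : ℤ) - ((y i : ℕ) : ℤ) : ℤ) : ℝ)| ≤ 2 * H / k := by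
    intro w hw h
    have e1 : |g w x - g w y| ≤ 1 := by
      have a1 := Nat.floor_le (g0 w hw x)
      have a2 := Nat.lt_floor_add_one (g w x)
      have a3 := Nat.floor_le (g0 w hw y)
      have a4 := Nat.lt_floor_add_one (g w y)
      rw [h] at a1 a2
      rw [abs_le]; constructor <;> linarith
    have e2 : g w x - g w y = (∑ i, w i * ((((x i : ℕ) : ℤ) - ((y i : ℕ) : ℤ) : ℤ) : ℝ)) *
        (k / (2 * H)) := by
      simp only [g]
      rw [← sub_mul]
      congr 1
      push_cast
      simp only [mul_sub, Finset.sum_sub_distrib]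
      ring
    rw [e2, abs_mul, abs_of_pos (by positivity : (0:ℝ) < k / (2*H))] at e1
    rw [le_div_iff₀ hk0]
    have := (le_div_iff₀ (by positivity : (0:ℝ) < k / (2*H))).mpr e1
    rw [one_div_div] at this
    rwa [le_div_iff₀ hk0] at this
  refine ⟨fun i => ((x i : ℕ) : ℤ) - ((y i : ℕ) : ℤ), ?_, ?_, diff a hHa hFa, diff c hHc hFc⟩
  · intro h
    apply hxy
    ext i
    have := congrFun h i
    simp only [Pi.zero_apply] at this
    omega
  · intro i
    have h1 := (x i).is_lt
    have h2 := (y i).is_lt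
    have : |((x i : ℕ) : ℤ) - ((y i : ℕ) : ℤ)| ≤ (k:ℤ)^2 := by
      rw [abs_le]
      have : ((k^2 : ℕ) : ℤ) = (k:ℤ)^2 := by push_cast; rfl
      rw [← this]
      omega
    exact_mod_cast this

lemma krylov_aux (M : Matrix (Fin 3) (Fin 3) ℤ)
    (hirr : Irreducible (Matrix.charpoly (M.map (Int.cast : ℤ → ℚ))))
    (m : Fin 3 → ℤ) (hm : m ≠ 0) :
    (Matrix.of fun i j : Fin 3 => ((M ^ (j:ℕ)).mulVec m) i).det ≠ 0 := by
  intro hdet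
  set A : Matrix (Fin 3) (Fin 3) ℚ := M.map (Int.cast : ℤ → ℚ) with hA
  set mq : Fin 3 → ℚ := fun i => (m i : ℚ) with hmq
  have hpow : ∀ (n : ℕ) (i : Fin 3), (((M ^ n).mulVec m) i : ℚ) = ((A^n).mulVec mq) i := by
    intro n i
    have h1 : A = (Int.castRingHom ℚ).mapMatrix M := rfl
    rw [h1, ← map_pow]
    simp [Matrix.mulVec, dotProduct, mq]
  have hdetq : (Matrix.of fun i j : Fin 3 => ((A ^ (j:ℕ)).mulVec mq) i).det = 0 := by
    have h := congrArg (Int.castRingHom ℚ) hdet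
    rw [RingHom.map_det, map_zero] at h
    rw [← h]
    congr 1
    ext i j
    simp [hpow]
  obtain ⟨s, hs, hs0⟩ := Matrix.exists_mulVec_eq_zero_iff.mpr hdetq
  let p : ℚ[X] := ∑ j : Fin 3, C (s j) * X ^ (j:ℕ)
  have hpA : (aeval A p).mulVec mq = 0 := by
    rw [← hs0]
    ext i
    simp only [p, map_sum, map_mul, aeval_C, map_pow, aeval_X, Matrix.sum_mulVec, Finset.sum_apply]
    simp only [Matrix.mulVec, dotProduct, Matrix.of_apply, Algebra.algebraMap_eq_smul_one,
      smul_mul_assoc, one_mul, Matrix.smul_apply, smul_eq_mul]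
    refine Finset.sum_congr rfl fun j _ => ?_
    rw [Finset.sum_mul]
    exact Finset.sum_congr rfl fun _ _ => by ring
  have hp0 : p ≠ 0 := by
    intro h
    apply hs
    ext j
    have := congrArg (fun q => q.coeff (j:ℕ)) h
    simp only [p, finsetSum_coeff, coeff_C_mul_X_pow, coeff_zero] at this
    simpa [Fin.val_inj] using this
  have hpdeg : p.natDegree ≤ 2 := by
    refine natDegree_sum_le_of_forall_le _ _ fun j _ => ?_
    refine (natDegree_C_mul_X_pow_le _ _).trans ?_
    omega
  have hcop : IsCoprime A.charpoly p := by
    refine (hirr.coprime_iff_not_dvd).mpr fun hd => ?_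
    have := natDegree_le_of_dvd hd hp0
    rw [Matrix.charpoly_natDegree_eq_dim] at this
    simp at this
    omega
  obtain ⟨a, b, hab⟩ := hcop
  have h1 := congrArg (aeval A) hab
  rw [map_add, map_mul, map_mul, Matrix.aeval_self_charpoly, mul_zero, zero_add, map_one] at h1
  have h2 : mq = 0 := by
    calc mq = (1 : Matrix (Fin 3) (Fin 3) ℚ).mulVec mq := (Matrix.one_mulVec _).symm
      _ = 0 := by rw [← h1, ← Matrix.mulVec_mulVec, hpA, Matrix.mulVec_zero]
  apply hm
  ext i
  have := congrFun h2 i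
  simpa [mq] using this

lemma eigen_aux (A : Matrix (Fin 3) (Fin 3) ℝ) (ν μ lam : ℝ) (h12 : ν < μ) (h23 : μ < lam)
    (hchar : A.charpoly = (X - C ν) * (X - C μ) * (X - C lam))
    (v : Fin 3 → ℝ) (hv : v ≠ 0) (heig : A.mulVec v = μ • v) :
    ∃ b : Module.Basis (Fin 3) ℝ (Fin 3 → ℝ), b 1 = v ∧
      ∀ i, A.mulVec (b i) = (![ν, μ, lam] i) • b i := by
  have ex : ∀ r : ℝ, A.charpoly.eval r = 0 → ∃ u : Fin 3 → ℝ, u ≠ 0 ∧ A.mulVec u = r • u := by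
    intro r hr
    rw [Matrix.eval_charpoly] at hr
    obtain ⟨u, hu, h⟩ := Matrix.exists_mulVec_eq_zero_iff.mpr hr
    refine ⟨u, hu, ?_⟩
    rw [Matrix.sub_mulVec, sub_eq_zero] at h
    rw [← h]
    simp
  obtain ⟨u, hu, hu'⟩ := ex ν (by simp [hchar])
  obtain ⟨w, hw, hw'⟩ := ex lam (by simp [hchar])
  have hinj : Function.Injective ![ν, μ, lam] := by
    have h13 := h12.trans h23
    intro i j h
    fin_cases i <;> fin_cases j <;> simp at h ⊢ <;> linarith
  have hall : ∀ i, A.mulVec (![u, v, w] i) = (![ν, μ, lam] i) • ![u, v, w] i := by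
    intro i; fin_cases i
    · exact hu'
    · exact heig
    · exact hw'
  have hli : LinearIndependent ℝ ![u, v, w] := by
    refine Module.End.eigenvectors_linearIndependent' (Matrix.toLin' A) ![ν, μ, lam] hinj _ ?_
    intro i
    rw [Module.End.hasEigenvector_iff, Module.End.mem_eigenspace_iff]
    refine ⟨by rw [Matrix.toLin'_apply]; exact hall i, ?_⟩
    fin_cases i
    · exact hu
    · exact hv
    · exact hw
  refine ⟨basisOfLinearIndependentOfCardEqFinrank hli (by simp), ?_, ?_⟩
  · simp
  · intro i
    simpa using hall i

lemma round_aux (M : Matrix (Fin 3) (Fin 3) ℤ)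
    (hirr : Irreducible (Matrix.charpoly (M.map (Int.cast : ℤ → ℚ))))
    (r : Fin 3 → ℝ) (L : ℝ) (hL : 1 ≤ L) (hr : ∀ i, |r i| ≤ L)
    (b : Module.Basis (Fin 3) ℝ (Fin 3 → ℝ))
    (hb : ∀ i, (M.map (Int.cast : ℤ → ℝ)).mulVec (b i) = r i • b i)
    (m : Fin 3 → ℤ) (hm : m ≠ 0) (z : Fin 3 → ℝ) :
    ∃ m' : Fin 3 → ℤ, ∀ i, |b.repr (z - fun j => (m' j : ℝ)) i| ≤
      3 * L ^ 2 * |b.repr (fun j => (m j : ℝ)) i| := by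
  set A : Matrix (Fin 3) (Fin 3) ℝ := M.map (Int.cast : ℤ → ℝ) with hA
  set mr : Fin 3 → ℝ := fun i => (m i : ℝ) with hmr
  have hstep : ∀ (x : Fin 3 → ℝ) i, b.repr (A.mulVec x) i = r i * b.repr x i := by
    intro x i
    conv_lhs => rw [← b.sum_repr x]
    rw [Matrix.mulVec_sum]
    simp only [Matrix.mulVec_smul, hb, map_sum, map_smul, Module.Basis.repr_self,
      Finsupp.finsetSum_apply, Finsupp.smul_apply, smul_eq_mul, Finsupp.single_apply]
    simp [mul_comm]
  have hpowc : ∀ (n : ℕ) (x : Fin 3 → ℝ) i,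
      b.repr ((A^n).mulVec x) i = r i ^ n * b.repr x i := by
    intro n
    induction n with
    | zero => intro x i; simp
    | succ n ih =>
      intro x i
      rw [pow_succ, ← Matrix.mulVec_mulVec, ih, hstep]; ring
  have hpow : ∀ (n : ℕ) (i : Fin 3), (((M ^ n).mulVec m) i : ℝ) = ((A^n).mulVec mr) i := by
    intro n i
    have h1 : A = (Int.castRingHom ℝ).mapMatrix M := rfl
    rw [h1, ← map_pow]
    simp [Matrix.mulVec, dotProduct, mr]
  set P : Matrix (Fin 3) (Fin 3) ℤ := Matrix.of fun i j : Fin 3 => ((M ^ (j:ℕ)).mulVec m) i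
    with hP
  have hdet : P.det ≠ 0 := krylov_aux M hirr m hm
  set Q : Matrix (Fin 3) (Fin 3) ℝ := P.map (Int.cast : ℤ → ℝ) with hQ
  have hdetr : Q.det ≠ 0 := by
    have h : Q = (Int.castRingHom ℝ).mapMatrix P := rfl
    rw [h, ← RingHom.map_det]
    simpa using hdet
  have hunit : IsUnit Q.det := isUnit_iff_ne_zero.mpr hdetr
  set s := Q⁻¹.mulVec z with hs
  have hQs : Q.mulVec s = z := by
    rw [hs, Matrix.mulVec_mulVec, Matrix.mul_nonsing_inv _ hunit, Matrix.one_mulVec]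
  refine ⟨P.mulVec fun j => ⌊s j⌋, fun i => ?_⟩
  have key : (z - fun j => ((P.mulVec (fun j => ⌊s j⌋) j : ℤ) : ℝ)) =
      ∑ j : Fin 3, Int.fract (s j) • (A ^ (j:ℕ)).mulVec mr := by
    rw [← hQs]
    ext k
    simp only [Pi.sub_apply, Finset.sum_apply, Pi.smul_apply, smul_eq_mul, ← hpow]
    simp only [Matrix.mulVec, dotProduct, hQ, hP, Matrix.map_apply, Matrix.of_apply]
    push_cast
    rw [← Finset.sum_sub_distrib]
    refine Finset.sum_congr rfl fun j _ => ?_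
    rw [Int.fract]; ring
  rw [key]
  simp only [map_sum, map_smul, Finsupp.finsetSum_apply, Finsupp.smul_apply, smul_eq_mul, hpowc]
  refine (Finset.abs_sum_le_sum_abs _ _).trans ?_
  have : ∀ j ∈ (Finset.univ : Finset (Fin 3)), |Int.fract (s j) * (r i ^ (j:ℕ) * b.repr mr i)| ≤
      L ^ 2 * |b.repr mr i| := by
    intro j _
    rw [abs_mul, abs_mul, abs_pow, abs_of_nonneg (Int.fract_nonneg _)]
    have h1 : |r i| ^ (j:ℕ) ≤ L ^ 2 :=
      (pow_le_pow_left₀ (abs_nonneg _) (hr i) _).trans (pow_le_pow_right₀ hL (by omega))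
    have h2 := (Int.fract_lt_one (s j)).le
    calc _ ≤ 1 * (|r i| ^ (j:ℕ) * |b.repr mr i|) := by gcongr
      _ ≤ _ := by rw [one_mul]; gcongr
  refine (Finset.sum_le_sum this).trans (le_of_eq ?_)
  simp; ring

theorem stmt10
    (M : Matrix (Fin 3) (Fin 3) ℤ)
    (hdet : M.det = 1 ∨ M.det = -1)
    (hirr : Irreducible (Matrix.charpoly (M.map (Int.cast : ℤ → ℚ))))
    (ν μ lam : ℝ) (hν0 : 0 < ν) (hν1 : ν < 1) (hμ1 : 1 < μ) (hμlam : μ < lam)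
    (hchar : Matrix.charpoly (M.map (Int.cast : ℤ → ℝ)) =
      (X - C ν) * (X - C μ) * (X - C lam))
    (v : EuclideanSpace ℝ (Fin 3)) (hv : ‖v‖ = 1)
    (heig : Matrix.toEuclideanLin (M.map (Int.cast : ℤ → ℝ)) v = μ • v) :
    ∃ C₀ : ℝ, 0 < C₀ ∧ ∀ D : ℝ, 1 ≤ D → ∀ x₀ y : EuclideanSpace ℝ (Fin 3),
      ∃ t ∈ Set.Icc (0 : ℝ) D, ∃ m : Fin 3 → ℤ,
        ‖x₀ + t • v - y - (EuclideanSpace.equiv (Fin 3) ℝ).symm (fun i => (m i : ℝ))‖ ≤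
          C₀ / Real.sqrt D := by
  have hv0 : (WithLp.ofLp v) ≠ 0 := by
    intro h
    have : v = 0 := by ext i; exact congrFun h i
    rw [this] at hv; simp at hv
  have heig' : (M.map (Int.cast : ℤ → ℝ)).mulVec (WithLp.ofLp v) = μ • WithLp.ofLp v := by
    have := congrArg WithLp.ofLp heig
    simpa using this
  obtain ⟨b, hb1, hb⟩ := eigen_aux _ ν μ lam (hν1.trans hμ1) hμlam hchar _ hv0 heig'
  have hL : 1 ≤ lam := (hμ1.trans hμlam).le
  have hr : ∀ i, |![ν, μ, lam] i| ≤ lam := by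
    intro i
    fin_cases i <;> simp <;> rw [abs_of_pos] <;> linarith
  let co : Fin 3 → Fin 3 → ℝ := fun i j => b.repr (Pi.single j 1) i
  have hco : ∀ (x : Fin 3 → ℝ) i, b.repr x i = ∑ j, co i j * x j := by
    intro x i
    conv_lhs => rw [pi_eq_sum_univ' x]
    simp only [map_sum, map_smul, Finsupp.finsetSum_apply, Finsupp.smul_apply, smul_eq_mul, co]
    refine Finset.sum_congr rfl fun j _ => ?_
    rw [mul_comm]
  obtain ⟨K, hK, hdir⟩ := dirichlet_aux (co 0) (co 2)
  set R := 3 * lam ^ 2 with hR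
  have hR0 : 0 < R := by positivity
  set B := 1 + ∑ j, |co 1 j| with hB
  have hB0 : 0 < B := by positivity
  set Q := 2 * (R * B) with hQ
  have hQ0 : 0 < Q := by positivity
  set U := ‖WithLp.toLp 2 (b 0)‖ + ‖WithLp.toLp 2 (b 2)‖ with hU
  have hU0 : 0 ≤ U := by positivity
  refine ⟨2 * √Q + R * K * U * (2 * √Q), by positivity, fun D hD x₀ y => ?_⟩
  have hD0 : 0 < D := by linarith
  have hsD : 0 < √D := Real.sqrt_pos.mpr hD0
  have hsQ : 0 < √Q := Real.sqrt_pos.mpr hQ0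
  by_cases hDQ : D < Q
  · refine ⟨0, ⟨le_rfl, hD0.le⟩, fun i => ⌊x₀ i - y i⌋, ?_⟩
    have h1 : ‖x₀ + (0:ℝ) • v - y - (EuclideanSpace.equiv (Fin 3) ℝ).symm
        (fun i => ((⌊x₀ i - y i⌋ : ℤ) : ℝ))‖ ≤ 2 := by
      rw [EuclideanSpace.norm_eq, Real.sqrt_le_left (by norm_num)]
      have : ∀ i ∈ (Finset.univ : Finset (Fin 3)), ‖(x₀ + (0:ℝ) • v - y - (EuclideanSpace.equiv (Fin 3) ℝ).symm
        (fun i => ((⌊x₀ i - y i⌋ : ℤ) : ℝ))) i‖ ^ 2 ≤ 1 := by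
        intro i _
        have : (x₀ + (0:ℝ) • v - y - (EuclideanSpace.equiv (Fin 3) ℝ).symm
          (fun i => ((⌊x₀ i - y i⌋ : ℤ) : ℝ))) i = Int.fract (x₀ i - y i) := by
          simp
        rw [this, Real.norm_eq_abs, sq_abs]
        have h0 := Int.fract_nonneg (x₀ i - y i)
        have h1 := (Int.fract_lt_one (x₀ i - y i)).le
        exact pow_le_one₀ h0 h1
      refine (Finset.sum_le_sum this).trans ?_
      simp; norm_num
    refine h1.trans ?_
    rw [le_div_iff₀ hsD]
    have : √D ≤ √Q := Real.sqrt_le_sqrt hDQ.le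
    have : 0 ≤ R * K * U * (2 * √Q) := by positivity
    linarith
  · push Not at hDQ
    set q := √(D / Q) with hq
    have hq1 : 1 ≤ q := by
      rw [hq, Real.one_le_sqrt]; exact (one_le_div hQ0).mpr hDQ
    set k := ⌊q⌋₊ with hk
    have hk1 : 1 ≤ k := Nat.one_le_floor_iff _ |>.mpr hq1
    have hk1r : (1:ℝ) ≤ k := by exact_mod_cast hk1
    have hkq : (k:ℝ) ≤ q := Nat.floor_le (by linarith)
    have hkq2 : q ≤ 2 * k := by
      have := Nat.lt_floor_add_one q
      linarith
    have hk2 : Q * (k:ℝ)^2 ≤ D := by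
      have : (k:ℝ)^2 ≤ D / Q := by
        rw [← Real.sq_sqrt (by positivity : 0 ≤ D / Q)]
        gcongr
      rw [le_div_iff₀ hQ0] at this
      linarith
    have hkinv : 1 / (k:ℝ) ≤ 2 * √Q / √D := by
      rw [hq, Real.sqrt_div hD0.le, div_le_iff₀ hsQ] at hkq2
      rw [div_le_div_iff₀ (by linarith) hsD]
      linarith
    obtain ⟨m, hm, hmk, hm0, hm2⟩ := hdir k hk1
    set τ := R * B * (k:ℝ)^2 with hτ
    obtain ⟨m', hm'⟩ := round_aux M hirr _ lam hL hr b hb m hm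
      (WithLp.ofLp (x₀ - y + τ • v))
    set z : Fin 3 → ℝ := WithLp.ofLp (x₀ - y + τ • v) - fun j => (m' j : ℝ) with hz
    have c0 : |b.repr z 0| ≤ R * (K / k) := by
      refine (hm' 0).trans ?_
      rw [hco]; gcongr
    have c2 : |b.repr z 2| ≤ R * (K / k) := by
      refine (hm' 2).trans ?_
      rw [hco]; gcongr
    have c1 : |b.repr z 1| ≤ τ := by
      refine (hm' 1).trans ?_
      rw [hco, hτ, mul_assoc R]
      gcongr
      refine (Finset.abs_sum_le_sum_abs _ _).trans ?_
      rw [hB, add_mul, Finset.sum_mul, one_mul]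
      have : ∑ i, |co 1 i * (m i : ℝ)| ≤ ∑ i, |co 1 i| * (k:ℝ)^2 := by
        refine Finset.sum_le_sum fun i _ => ?_
        rw [abs_mul]
        exact mul_le_mul_of_nonneg_left (hmk i) (abs_nonneg _)
      nlinarith
    rw [abs_le] at c1
    refine ⟨τ - b.repr z 1, ⟨by linarith, ?_⟩, m', ?_⟩
    · have : 2 * τ = Q * (k:ℝ)^2 := by rw [hτ, hQ]; ring
      linarith
    · have hzsum : z = b.repr z 0 • b 0 + b.repr z 1 • b 1 + b.repr z 2 • b 2 := by
        conv_lhs => rw [← b.sum_repr z]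
        rw [Fin.sum_univ_three]
      have hvec : x₀ + (τ - b.repr z 1) • v - y -
          (EuclideanSpace.equiv (Fin 3) ℝ).symm (fun i => (m' i : ℝ)) =
          b.repr z 0 • WithLp.toLp 2 (b 0) + b.repr z 2 • WithLp.toLp 2 (b 2) := by
        ext i
        have h1 := congrFun hzsum i
        have h2 : z i = x₀ i - y i + τ * v i - m' i := by simp [hz]
        rw [hb1, h2] at h1
        simp only [Pi.add_apply, Pi.smul_apply, smul_eq_mul] at h1
        simp
        linarith
      rw [hvec]
      refine (norm_add_le _ _).trans ?_
      rw [norm_smul, norm_smul, Real.norm_eq_abs, Real.norm_eq_abs]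
      calc _ ≤ R * (K / k) * ‖WithLp.toLp 2 (b 0)‖ + R * (K / k) * ‖WithLp.toLp 2 (b 2)‖ := by
            gcongr
        _ = R * K * U * (1 / k) := by rw [hU]; ring
        _ ≤ R * K * U * (2 * √Q / √D) := by gcongr
        _ = R * K * U * (2 * √Q) / √D := by ring
        _ ≤ _ := by gcongr; linarith
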